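/- Consider the natural action of the symmetric group on Fin 6 on collections of 3-element subsets of Fin 6 (a permutation σ sends a collection C to the collection of images σ(T) for T ∈ C; this action preserves adequacy). The number of orbits of this action on the set of adequate collections of 3-element subsets of Fin 6 is exactly 175. -/

import Mathlib

/-- A collection `C` of 3-element subsets of `Fin m` is adequate if for every
`i : Fin m` and every `T ∈ C` there is a 2-element subset `S ⊆ T` with `i ∉ S`
and `S ∪ {i} ∈ C`. -/
def Adequate {m : ℕ} (C : Finset (Finset (Fin m))) : Prop :=
  ∀ i : Fin m, ∀ T ∈ C, ∃ S : Finset (Fin m),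
    S ⊆ T ∧ S.card = 2 ∧ i ∉ S ∧ insert i S ∈ C

/-!
By Burnside's lemma, 720 times the number of orbits is the sum, over the permutations `σ` of six
points, of the number of adequate collections fixed by `σ`. This number depends only on the cycle
type of `σ`, so there are eleven numbers to compute.

Both adequacy and invariance under `σ` are conjunctions of closure conditions: if the triple `T`
belongs to the collection, then so does one of the triples of a list determined by `T`. For
adequacy at the point `i` these are the triples `T'` containing `i` with `T' \ {i} ⊆ T`; for
invariance the list is `[σ T]`. A collection of triples is an assignment of twenty Boolean
variables, so a predicate on collections is a truth table with `2 ^ 20` entries. Stored as the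
binary digits of one natural number, the tables are combined by bitwise operations, and the count
is the number of digits `1`. The weighted sum of the eleven counts is `126000 = 175 * 720`.
-/

open Equiv MulAction
open scoped Pointwise

section Burnside

variable {G X : Type*} [Group G] [MulAction G X]

theorem card_fixedBy_eq_of_isConj {g h : G} (hgh : IsConj g h) :
    Nat.card (fixedBy X g) = Nat.card (fixedBy X h) := by
  obtain ⟨k, rfl⟩ := isConj_iff.1 hgh
  rw [← smul_fixedBy, Set.natCard_smul_set]

theorem sum_card_fixedBy_eq_card_orbits_mul_card [Fintype G] [Finite X] :
    ∑ g : G, Nat.card (fixedBy X g) = Nat.card (orbitRel.Quotient G X) * Nat.card G := by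
  classical
  have := Fintype.ofFinite X
  simpa only [Nat.card_eq_fintype_card] using sum_card_fixedBy_eq_card_orbits_mul_card_group G X

end Burnside

section ClassSums

theorem sum_eq_sum_card_fiber_smul {α ι κ M : Type*} [Fintype α] [Fintype ι] [DecidableEq κ]
    [AddCommMonoid M] {c : α → κ} {r : ι → α} (hr : Function.Injective (c ∘ r))
    (hcard : ∑ j, (Finset.univ.filter fun a => c a = c (r j)).card = Fintype.card α)
    {f : α → M} (hf : ∀ a b, c a = c b → f a = f b) :
    ∑ a, f a = ∑ j, (Finset.univ.filter fun a => c a = c (r j)).card • f (r j) := by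
  classical
  let fiber (j : ι) : Finset α := Finset.univ.filter fun a => c a = c (r j)
  have hdisj : ((Finset.univ : Finset ι) : Set ι).PairwiseDisjoint fiber := fun i _ j _ hij =>
    Finset.disjoint_filter.2 fun a _ hi hj => hij (hr (hi.symm.trans hj))
  have hcover : Finset.univ.biUnion fiber = Finset.univ := by
    rw [← Finset.card_eq_iff_eq_univ, Finset.card_biUnion hdisj, hcard]
  calc ∑ a, f a = ∑ j, ∑ a ∈ fiber j, f a := by rw [← Finset.sum_biUnion hdisj, hcover]
    _ = ∑ j, (fiber j).card • f (r j) := Finset.sum_congr rfl fun j _ =>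
      Finset.sum_eq_card_nsmul fun a ha => hf a (r j) ((Finset.mem_filter_univ a).1 ha)

/-- A permutation of each of the eleven cycle types in the symmetric group on six letters. -/
def cycleTypeRep : Fin 11 → Perm (Fin 6) :=
  ![1, c[0, 1], c[0, 1] * c[2, 3], c[0, 1] * c[2, 3] * c[4, 5], c[0, 1, 2], c[0, 1, 2] * c[3, 4],
    c[0, 1, 2] * c[3, 4, 5], c[0, 1, 2, 3], c[0, 1, 2, 3] * c[4, 5], c[0, 1, 2, 3, 4],
    c[0, 1, 2, 3, 4, 5]]

theorem cycleType_cycleTypeRep (j : Fin 11) :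
    (cycleTypeRep j).cycleType =
      ![0, {2}, {2, 2}, {2, 2, 2}, {3}, {3, 2}, {3, 3}, {4}, {4, 2}, {5}, {6}] j := by
  decide +kernel +revert

theorem cycleType_comp_cycleTypeRep_injective :
    Function.Injective (Perm.cycleType ∘ cycleTypeRep) := by
  simp only [Function.comp_def, cycleType_cycleTypeRep]
  decide +kernel

theorem card_cycleType_eq_cycleTypeRep (j : Fin 11) :
    (Finset.univ.filter fun σ : Perm (Fin 6) => σ.cycleType = (cycleTypeRep j).cycleType).card =
      ![1, 15, 45, 15, 40, 120, 40, 90, 90, 144, 120] j := by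
  rw [cycleType_cycleTypeRep, Perm.card_of_cycleType]
  decide +kernel +revert

theorem sum_perm_fin_six_eq_sum_cycleTypeRep {M : Type*} [AddCommMonoid M]
    {f : Perm (Fin 6) → M} (hf : ∀ σ τ, IsConj σ τ → f σ = f τ) :
    ∑ σ, f σ = ∑ j, ![1, 15, 45, 15, 40, 120, 40, 90, 90, 144, 120] j • f (cycleTypeRep j) := by
  have hcard : ∑ j, ![1, 15, 45, 15, 40, 120, 40, 90, 90, 144, 120] j =
      Fintype.card (Perm (Fin 6)) := by
    rw [Fintype.card_perm, Fintype.card_fin]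
    decide
  simp only [← card_cycleType_eq_cycleTypeRep] at hcard ⊢
  exact sum_eq_sum_card_fiber_smul cycleType_comp_cycleTypeRep_injective hcard
    fun σ τ h => hf σ τ (Perm.isConj_iff_cycleType_eq.2 h)

end ClassSums

section TruthTables

variable {n : ℕ}

/-- The set of positions of the binary digits `1` of `c` among its `n` lowest digits. It is the
assignment of the `n` Boolean variables that has number `c` in a truth table. -/
def digitSet (n c : ℕ) : Finset (Fin n) :=
  {k | c.testBit k}

theorem mem_digitSet {c : ℕ} {k : Fin n} : k ∈ digitSet n c ↔ c.testBit k := by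
  simp only [digitSet, Finset.mem_filter_univ]

theorem digitSet_injOn : Set.InjOn (digitSet n) (Finset.range (2 ^ n)) := by
  intro c hc d hd h
  rw [Finset.mem_coe, Finset.mem_range] at hc hd
  refine Nat.eq_of_testBit_eq fun k => ?_
  rcases lt_or_ge k n with hk | hk
  · simpa only [mem_digitSet, ← Bool.eq_iff_iff] using Finset.ext_iff.1 h ⟨k, hk⟩
  · have hpow : 2 ^ n ≤ 2 ^ k := Nat.pow_le_pow_right two_pos hk
    rw [Nat.testBit_lt_two_pow (hc.trans_le hpow), Nat.testBit_lt_two_pow (hd.trans_le hpow)]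

theorem exists_digitSet_eq (s : Finset (Fin n)) : ∃ c < 2 ^ n, digitSet n c = s := by
  refine ⟨Nat.ofBits fun k => k ∈ s, Nat.ofBits_lt_two_pow _, ?_⟩
  ext k
  simp [mem_digitSet, Nat.testBit_ofBits_lt]

/-- The number `X`, whose binary digits are read as a table, is the truth table of the predicate
`P` on assignments of `n` Boolean variables; an assignment is the set of its true variables. -/
def IsTruthTable (X : ℕ) (P : Finset (Fin n) → Prop) : Prop :=
  ∀ c < 2 ^ n, X.testBit c ↔ P (digitSet n c)

namespace IsTruthTable

variable {X Y : ℕ} {P Q : Finset (Fin n) → Prop}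

theorem const_true : IsTruthTable (2 ^ 2 ^ n - 1) fun _ : Finset (Fin n) => True := by
  intro c hc
  simpa only [Nat.testBit_two_pow_sub_one, decide_eq_true_eq, iff_true] using hc

theorem not (hX : IsTruthTable X P) : IsTruthTable (2 ^ 2 ^ n - 1 ^^^ X) fun s => ¬ P s := by
  intro c hc
  simp only [← hX c hc, Nat.testBit_xor, Nat.testBit_two_pow_sub_one, decide_eq_true hc,
    Bool.true_xor, Bool.not_eq_true', Bool.not_eq_true]

theorem and (hX : IsTruthTable X P) (hY : IsTruthTable Y Q) :
    IsTruthTable (X &&& Y) fun s => P s ∧ Q s := by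
  intro c hc
  rw [Nat.testBit_and, Bool.and_eq_true, hX c hc, hY c hc]

theorem or (hX : IsTruthTable X P) (hY : IsTruthTable Y Q) :
    IsTruthTable (X ||| Y) fun s => P s ∨ Q s := by
  intro c hc
  rw [Nat.testBit_or, Bool.or_eq_true, hX c hc, hY c hc]

end IsTruthTable

/-- The truth table of the `k`-th of `n` Boolean variables. The table for `n + 1` variables
consists of two blocks of `2 ^ n` digits, the higher one for the assignments in which the last
variable is true; multiplication by `2 ^ 2 ^ n + 1` writes the same block twice. -/
def varTable : ℕ → ℕ → ℕ
  | 0, _ => 0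
  | n + 1, k => if k = n then 2 ^ 2 ^ n * (2 ^ 2 ^ n - 1) else (2 ^ 2 ^ n + 1) * varTable n k

theorem varTable_lt (n k : ℕ) : varTable n k < 2 ^ 2 ^ n := by
  induction n with
  | zero => simp [varTable]
  | succ n ih =>
    have : 2 ^ 2 ^ (n + 1) = 2 ^ 2 ^ n * 2 ^ 2 ^ n := by rw [pow_succ, mul_two, pow_add]
    rw [varTable, this]
    split_ifs
    · gcongr
      exact Nat.sub_lt (by positivity) one_pos
    · nlinarith

theorem testBit_varTable {k c : ℕ} (hk : k < n) (hc : c < 2 ^ n) :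
    (varTable n k).testBit c = c.testBit k := by
  induction n generalizing c with
  | zero => omega
  | succ n ih =>
    rw [pow_succ, mul_two] at hc
    rw [varTable]
    split_ifs with hkn
    · subst hkn
      rw [Nat.testBit_two_pow_mul, Nat.testBit_two_pow_sub_one]
      rcases lt_or_ge c (2 ^ k) with hlt | hge
      · simp [hlt.not_ge, Nat.testBit_lt_two_pow hlt]
      · obtain ⟨d, rfl⟩ := Nat.exists_eq_add_of_le hge
        have hd : d < 2 ^ k := by omega
        simp [hd, Nat.testBit_two_pow_add_eq, Nat.testBit_lt_two_pow hd]
    · have hk' : k < n := by omega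
      rw [add_one_mul, Nat.testBit_two_pow_mul_add _ (varTable_lt n k)]
      split_ifs with hlt
      · exact ih hk' hlt
      · obtain ⟨d, rfl⟩ := Nat.exists_eq_add_of_le (not_lt.1 hlt)
        rw [Nat.add_sub_cancel_left, ih hk' (by omega), Nat.testBit_two_pow_add_gt hk']

theorem isTruthTable_varTable (k : Fin n) : IsTruthTable (varTable n k) fun s => k ∈ s := by
  intro c hc
  simp only [testBit_varTable k.isLt hc, mem_digitSet]

/-- The number of digits `1` among the `2 ^ n` lowest binary digits of a number, computed by
halving the block of digits and skipping the blocks without a digit `1`. -/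
def countBits : ℕ → ℕ → ℕ
  | 0, X => X % 2
  | _ + 1, 0 => 0
  | n + 1, X + 1 => countBits n ((X + 1) % 2 ^ 2 ^ n) + countBits n ((X + 1) / 2 ^ 2 ^ n)

theorem countBits_eq_card (n X : ℕ) :
    countBits n X = ((Finset.range (2 ^ n)).filter fun c => X.testBit c).card := by
  induction n generalizing X with
  | zero => rcases Nat.mod_two_eq_zero_or_one X with h | h <;>
      simp [countBits, Finset.filter_singleton, h]
  | succ n ih =>
    cases X with
    | zero => simp [countBits]
    | succ X =>
      rw [countBits, ih, ih, pow_succ, mul_two]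
      simp only [Finset.card_filter, Finset.sum_range_add, Nat.testBit_div_two_pow,
        Nat.testBit_mod_two_pow]
      congr 1
      · refine Finset.sum_congr rfl fun c hc => ?_
        simp [Finset.mem_range.1 hc]
      · simp only [add_comm]

theorem IsTruthTable.card_eq_countBits {X : ℕ} {P : Finset (Fin n) → Prop}
    (hX : IsTruthTable X P) : Nat.card {s // P s} = countBits n X := by
  classical
  rw [countBits_eq_card, Nat.card_eq_fintype_card, Fintype.card_subtype]
  refine (Finset.card_nbij (digitSet n) ?_ (digitSet_injOn.mono ?_) ?_).symm
  · intro c hc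
    rw [Finset.mem_coe, Finset.mem_filter, Finset.mem_range] at hc
    exact (Finset.mem_filter_univ _).2 ((hX c hc.1).1 hc.2)
  · exact_mod_cast Finset.filter_subset _ _
  · intro s hs
    obtain ⟨c, hc, rfl⟩ := exists_digitSet_eq s
    have hP := (Finset.mem_filter_univ _).1 (Finset.mem_coe.1 hs)
    exact ⟨c, by simpa using ⟨hc, (hX c hc).2 hP⟩, rfl⟩

end TruthTables

section Rules

variable {n : ℕ}

/-- A closure condition on subsets of `Fin n`: if the premise belongs to the set, then so does at
least one of the conclusions. -/
structure Rule (n : ℕ) where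
  /-- The element that triggers the rule. -/
  premise : Fin n
  /-- The elements one of which is then required. -/
  conclusions : List (Fin n)

/-- The set `s` satisfies the closure condition `r`. -/
def Rule.Holds (r : Rule n) (s : Finset (Fin n)) : Prop :=
  r.premise ∈ s → ∃ k ∈ r.conclusions, k ∈ s

/-- The truth table of a single rule. -/
def Rule.table (r : Rule n) : ℕ :=
  r.conclusions.foldr (fun (k : Fin n) X => varTable n k ||| X)
    (2 ^ 2 ^ n - 1 ^^^ varTable n r.premise)

/-- The truth table of the conjunction of a list of rules. -/
def rulesTable (R : List (Rule n)) : ℕ :=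
  R.foldr (fun r X => r.table &&& X) (2 ^ 2 ^ n - 1)

theorem Rule.isTruthTable_table (r : Rule n) : IsTruthTable r.table r.Holds := by
  obtain ⟨a, L⟩ := r
  suffices IsTruthTable (Rule.table ⟨a, L⟩) fun s => a ∉ s ∨ ∃ k ∈ L, k ∈ s by
    simpa only [Rule.Holds, imp_iff_not_or, IsTruthTable] using this
  induction L with
  | nil =>
    simpa only [Rule.table, List.foldr_nil, List.not_mem_nil, false_and, exists_false, or_false]
      using (isTruthTable_varTable a).not
  | cons k L ih =>
    simpa only [Rule.table, List.foldr_cons, List.mem_cons, exists_eq_or_imp, or_left_comm]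
      using (isTruthTable_varTable k).or ih

theorem isTruthTable_rulesTable (R : List (Rule n)) :
    IsTruthTable (rulesTable R) fun s => ∀ r ∈ R, r.Holds s := by
  induction R with
  | nil => simpa [rulesTable] using IsTruthTable.const_true
  | cons r R ih =>
    simpa only [List.forall_mem_cons, rulesTable, List.foldr_cons]
      using r.isTruthTable_table.and ih

theorem card_forall_holds_eq_countBits (R : List (Rule n)) :
    Nat.card {s // ∀ r ∈ R, r.Holds s} = countBits n (rulesTable R) :=
  (isTruthTable_rulesTable R).card_eq_countBits

end Rules

section AdequateTriples

variable {m : ℕ}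

theorem adequate_iff_exists_erase_subset {C : Finset (Finset (Fin m))} (hC : ∀ T ∈ C, T.card = 3) :
    Adequate C ↔ ∀ i, ∀ T ∈ C, ∃ T' ∈ C, i ∈ T' ∧ T'.erase i ⊆ T := by
  refine forall_congr' fun i => forall₂_congr fun T _ => ⟨?_, ?_⟩
  · rintro ⟨S, hST, -, hiS, hS⟩
    exact ⟨insert i S, hS, Finset.mem_insert_self i S, by rwa [Finset.erase_insert hiS]⟩
  · rintro ⟨T', hT', hi, hsub⟩
    refine ⟨T'.erase i, hsub, ?_, Finset.notMem_erase i T', by rwa [Finset.insert_erase hi]⟩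
    rw [Finset.card_erase_of_mem hi, hC T' hT']

theorem Adequate.smul {C : Finset (Finset (Fin m))} (hC : Adequate C) (σ : Perm (Fin m)) :
    Adequate (σ • C) := by
  intro i T hT
  obtain ⟨U, hU, rfl⟩ := Finset.mem_smul_finset.1 hT
  obtain ⟨S, hSU, hS, hiS, hmem⟩ := hC (σ⁻¹ • i) U hU
  refine ⟨σ • S, Finset.smul_finset_subset_smul_finset hSU, by rwa [Finset.card_smul_finset],
    by rwa [← Finset.inv_smul_mem_iff], ?_⟩
  rw [← Finset.inv_smul_mem_iff]
  rwa [← smul_inv_smul σ i, ← Finset.smul_finset_insert, inv_smul_smul]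

/-- The adequate collections of triples of `Fin m`, with the action of the symmetric group. -/
def adequateTriples (m : ℕ) : SubMulAction (Perm (Fin m)) (Finset (Finset (Fin m))) where
  carrier := {C | (∀ T ∈ C, T.card = 3) ∧ Adequate C}
  smul_mem' σ C hC := by
    refine ⟨fun T hT => ?_, hC.2.smul σ⟩
    obtain ⟨U, hU, rfl⟩ := Finset.mem_smul_finset.1 hT
    rw [Finset.card_smul_finset, hC.1 U hU]

theorem mem_adequateTriples {C : Finset (Finset (Fin m))} :
    C ∈ adequateTriples m ↔ (∀ T ∈ C, T.card = 3) ∧ Adequate C :=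
  Iff.rfl

variable {N : ℕ} (e : Fin N ≃ {T : Finset (Fin m) // T.card = 3})

/-- The collection of triples whose numbers in the enumeration `e` form the set `s`. -/
def tripleCollection (s : Finset (Fin N)) : Finset (Finset (Fin m)) :=
  s.map (e.toEmbedding.trans (.subtype _))

/-- Adequacy as closure conditions on the numbers of the triples in the enumeration `e`. -/
def exchangeRules : List (Rule N) :=
  (List.finRange m).flatMap fun i => (List.finRange N).map fun k =>
    ⟨k, (List.finRange N).filter fun l => i ∈ (e l).1 ∧ (e l).1.erase i ⊆ (e k).1⟩

/-- Invariance under `σ` as closure conditions on the numbers of the triples in the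
enumeration `e`. -/
def invarianceRules (σ : Perm (Fin m)) : List (Rule N) :=
  (List.finRange N).map fun k =>
    ⟨k, (List.finRange N).filter fun l => (e l).1 = σ • (e k).1⟩

variable {e}

theorem mem_tripleCollection {s : Finset (Fin N)} {k : Fin N} :
    (e k).1 ∈ tripleCollection e s ↔ k ∈ s :=
  Finset.mem_map' (e.toEmbedding.trans (.subtype _))

theorem forall_mem_tripleCollection {s : Finset (Fin N)} {p : Finset (Fin m) → Prop} :
    (∀ T ∈ tripleCollection e s, p T) ↔ ∀ k ∈ s, p (e k).1 := by
  simp [tripleCollection]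

theorem exists_mem_tripleCollection {s : Finset (Fin N)} {p : Finset (Fin m) → Prop} :
    (∃ T ∈ tripleCollection e s, p T) ↔ ∃ k ∈ s, p (e k).1 := by
  simp [tripleCollection]

theorem tripleCollection_injective : Function.Injective (tripleCollection e) :=
  Finset.map_injective _

theorem exists_tripleCollection_eq {C : Finset (Finset (Fin m))} (hC : ∀ T ∈ C, T.card = 3) :
    ∃ s, tripleCollection e s = C := by
  refine ⟨Finset.univ.filter fun k => (e k).1 ∈ C, Finset.ext fun T => ⟨?_, fun hT => ?_⟩⟩
  · revert T
    simp [forall_mem_tripleCollection]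
  · obtain ⟨k, hk⟩ := e.surjective ⟨T, hC T hT⟩
    obtain rfl : (e k).1 = T := congrArg Subtype.val hk
    rw [mem_tripleCollection]
    simpa using hT

theorem adequate_tripleCollection_iff {s : Finset (Fin N)} :
    Adequate (tripleCollection e s) ↔ ∀ r ∈ exchangeRules e, r.Holds s := by
  rw [adequate_iff_exists_erase_subset (forall_mem_tripleCollection.2 fun k _ => (e k).2)]
  simp only [forall_mem_tripleCollection, exists_mem_tripleCollection]
  simp only [exchangeRules, Rule.Holds, List.forall_mem_flatMap, List.forall_mem_map,
    List.mem_finRange, forall_const, List.mem_filter, decide_eq_true_eq, true_and, and_comm]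

theorem smul_tripleCollection_eq_iff {s : Finset (Fin N)} {σ : Perm (Fin m)} :
    σ • tripleCollection e s = tripleCollection e s ↔ ∀ r ∈ invarianceRules e σ, r.Holds s := by
  rw [← mem_stabilizer_iff, mem_stabilizer_finset', forall_mem_tripleCollection]
  simp only [invarianceRules, Rule.Holds, List.forall_mem_map, List.mem_finRange, forall_const,
    List.mem_filter, decide_eq_true_eq, true_and]
  refine forall₂_congr fun k _ => ?_
  simp only [tripleCollection, Finset.mem_map, Function.Embedding.trans_apply]
  exact exists_congr fun l => and_comm

variable (e) in
theorem card_fixedBy_adequateTriples (σ : Perm (Fin m)) :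
    Nat.card (fixedBy (adequateTriples m) σ) =
      countBits N (rulesTable (exchangeRules e ++ invarianceRules e σ)) := by
  have hmem (s) : (∀ r ∈ exchangeRules e ++ invarianceRules e σ, r.Holds s) ↔
      tripleCollection e s ∈ adequateTriples m ∧
        σ • tripleCollection e s = tripleCollection e s := by
    rw [List.forall_mem_append, ← adequate_tripleCollection_iff, ← smul_tripleCollection_eq_iff,
      mem_adequateTriples, and_iff_right (forall_mem_tripleCollection.2 fun k _ => (e k).2)]
  rw [← card_forall_holds_eq_countBits]
  symm
  refine Nat.card_eq_of_bijective
    (fun s => ⟨⟨tripleCollection e s.1, ((hmem _).1 s.2).1⟩, Subtype.ext ((hmem _).1 s.2).2⟩)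
    ⟨fun s t hst => Subtype.ext <| tripleCollection_injective <|
      congrArg (fun C => C.1.1) hst, ?_⟩
  rintro ⟨⟨C, hC⟩, hσ⟩
  obtain ⟨s, rfl⟩ := exists_tripleCollection_eq (e := e) hC.1
  exact ⟨⟨s, (hmem s).2 ⟨hC, congrArg Subtype.val hσ⟩⟩, rfl⟩

end AdequateTriples

section SixPoints

/-- The enumeration of the twenty triples of `Fin 6` in lexicographic order. -/
noncomputable def tripleEquiv : Fin 20 ≃ {T : Finset (Fin 6) // T.card = 3} :=
  Equiv.ofBijective
    ![⟨{0, 1, 2}, rfl⟩, ⟨{0, 1, 3}, rfl⟩, ⟨{0, 1, 4}, rfl⟩, ⟨{0, 1, 5}, rfl⟩, ⟨{0, 2, 3}, rfl⟩,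
      ⟨{0, 2, 4}, rfl⟩, ⟨{0, 2, 5}, rfl⟩, ⟨{0, 3, 4}, rfl⟩, ⟨{0, 3, 5}, rfl⟩, ⟨{0, 4, 5}, rfl⟩,
      ⟨{1, 2, 3}, rfl⟩, ⟨{1, 2, 4}, rfl⟩, ⟨{1, 2, 5}, rfl⟩, ⟨{1, 3, 4}, rfl⟩, ⟨{1, 3, 5}, rfl⟩,
      ⟨{1, 4, 5}, rfl⟩, ⟨{2, 3, 4}, rfl⟩, ⟨{2, 3, 5}, rfl⟩, ⟨{2, 4, 5}, rfl⟩, ⟨{3, 4, 5}, rfl⟩]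
    (by decide +kernel)

theorem card_fixedBy_cycleTypeRep (j : Fin 11) :
    Nat.card (fixedBy (adequateTriples 6) (cycleTypeRep j)) =
      ![50334, 1508, 718, 292, 60, 26, 96, 24, 26, 9, 10] j := by
  rw [card_fixedBy_adequateTriples tripleEquiv]
  decide +kernel +revert

theorem card_orbits_adequateTriples_six :
    Nat.card (orbitRel.Quotient (Perm (Fin 6)) (adequateTriples 6)) = 175 := by
  have hperm : Nat.card (Perm (Fin 6)) = 720 := by
    rw [Nat.card_perm, Nat.card_fin]
    rfl
  have hburnside : Nat.card (orbitRel.Quotient (Perm (Fin 6)) (adequateTriples 6)) * 720 =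
      175 * 720 := by
    rw [← hperm, ← sum_card_fixedBy_eq_card_orbits_mul_card,
      sum_perm_fin_six_eq_sum_cycleTypeRep fun _ _ => card_fixedBy_eq_of_isConj, hperm]
    simp only [card_fixedBy_cycleTypeRep]
    decide
  exact Nat.eq_of_mul_eq_mul_right (by norm_num) hburnside

end SixPoints

/-- Orbit equivalence: two adequate collections are related if some permutation
of `Fin 6` maps one to the other. -/
theorem stmt_13 :
    Nat.card (Quot (fun (C C' : {C : Finset (Finset (Fin 6)) //
        (∀ T ∈ C, T.card = 3) ∧ Adequate C}) =>
      ∃ σ : Equiv.Perm (Fin 6),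
        C.1.image (fun T => T.image σ) = C'.1)) = 175 := by
  rw [← card_orbits_adequateTriples_six]
  let e : {C : Finset (Finset (Fin 6)) // (∀ T ∈ C, T.card = 3) ∧ Adequate C} ≃
    adequateTriples 6 := Equiv.subtypeEquivRight fun _ => mem_adequateTriples.symm
  refine Nat.card_congr (Quot.congr e fun C C' => ?_)
  calc (∃ σ : Perm (Fin 6), σ • (e C).1 = (e C').1)
    _ ↔ ∃ σ : Perm (Fin 6), σ • e C = e C' := by simp only [Subtype.ext_iff, SubMulAction.val_smul]
    _ ↔ orbitRel (Perm (Fin 6)) _ (e C) (e C') := by rw [orbitRel_apply, mem_orbit_symm]; rfl
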